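/- Let n ≥ 3 and for each j ∈ {1,…,n−1} let (f^j_l)_{l∈ℕ} be a sequence of polynomials in ℝ[x₁,…,x_{n−1}] satisfying the recursion f^j_{l+2} = −Δ_{n−1}(f^j_l) for all l ≥ 0, where Δ_{n−1} = ∑_{p=1}^{n−1} ∂²_{x_p}. Then the system [(a) ∑_{j=1}^{n−1} x_j f^j_0 = 0, and (b) ∑_{j=1}^{n−1} x_j f^j_{l+3}/(l+3) = −∑_{j=1}^{n−1} Δ_{n−1}(x_j f^j_{l+1}/(l+1)) for all l ≥ 0] holds if and only if the system [(a) ∑_{j=1}^{n−1} x_j f^j_0 = 0, and (b') ∑_{j=1}^{n−1} ∂_{x_j}(f^j_1) = −Δ_{n−1}(∑_{j=1}^{n−1} x_j f^j_1)] holds. -/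

import Mathlib

open MvPolynomial

/-- The Laplacian `Δ_{n−1} = ∑_{p=1}^{n−1} ∂²_{x_p}` on `ℝ[x₁,…,x_{n−1}]`. -/
noncomputable def lapNm1 {m : ℕ} (p : MvPolynomial (Fin m) ℝ) : MvPolynomial (Fin m) ℝ :=
  ∑ r : Fin m, pderiv r (pderiv r p)

/-!
Write `E F = ∑ⱼ xⱼ Fⱼ` and `D F = ∑ⱼ ∂ⱼ Fⱼ` for a polynomial vector field `F`. The Laplacian
commutes with `D`, while `Δ E = E Δ + 2 D`, so the operators `P c = Δ E + c D` satisfy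
`Δ (P c) = P (c + 2) Δ`. Hence along a sequence with `F (l + 2) = -Δ (F l)` the polynomials
`P l (F l)` obey the same recursion and all vanish once the first two do. The equation `(b)` at `l`
says `P (l + 1) (F (l + 1)) = 0`, the equation `(b')` says `P 1 (F 1) = 0`, and `(a)` gives
`P 0 (F 0) = 0`.
-/

section CommSemiring

variable {σ R : Type*} [CommSemiring R]

theorem pderiv_pderiv_comm (i j : σ) (p : MvPolynomial σ R) :
    pderiv i (pderiv j p) = pderiv j (pderiv i p) := by
  classical
  induction p using MvPolynomial.induction_on with
  | C a => simp only [pderiv_C, map_zero]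
  | add p q hp hq => simp only [map_add, hp, hq]
  | mul_X p k hp =>
    simp only [pderiv_mul, map_add, pderiv_X, Pi.single_apply, hp]
    split_ifs <;> simp [add_comm, add_left_comm]

variable [Fintype σ]

/-- The Laplacian `∑ᵢ ∂ᵢ²` as a linear endomorphism of `R[xᵢ]`. -/
noncomputable def polyLaplacian : MvPolynomial σ R →ₗ[R] MvPolynomial σ R :=
  ∑ i, (pderiv i).toLinearMap ∘ₗ (pderiv i).toLinearMap

/-- The Laplacian of a polynomial vector field, taken componentwise. -/
noncomputable def vectorLaplacian : (σ → MvPolynomial σ R) →ₗ[R] (σ → MvPolynomial σ R) :=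
  polyLaplacian.compLeft σ

/-- The scalar product `∑ⱼ xⱼ Fⱼ` of a polynomial vector field with the position vector. -/
noncomputable def positionDot : (σ → MvPolynomial σ R) →ₗ[R] MvPolynomial σ R :=
  ∑ j, LinearMap.mulLeft R (X j) ∘ₗ LinearMap.proj j

/-- The divergence `∑ⱼ ∂ⱼ Fⱼ` of a polynomial vector field. -/
noncomputable def polyDivergence : (σ → MvPolynomial σ R) →ₗ[R] MvPolynomial σ R :=
  ∑ j, (pderiv j).toLinearMap ∘ₗ LinearMap.proj j

/-- The operator `F ↦ Δ (∑ⱼ xⱼ Fⱼ) + c ∑ⱼ ∂ⱼ Fⱼ`, whose vanishing on the `l`-th field of a sequence,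
with `c = l`, encodes the equations `(b)` and `(b')`. -/
noncomputable def radialDefect (c : R) : (σ → MvPolynomial σ R) →ₗ[R] MvPolynomial σ R :=
  polyLaplacian ∘ₗ positionDot + c • polyDivergence

theorem polyLaplacian_apply (p : MvPolynomial σ R) :
    polyLaplacian p = ∑ i, pderiv i (pderiv i p) := by
  simp [polyLaplacian]

theorem vectorLaplacian_apply (F : σ → MvPolynomial σ R) (j : σ) :
    vectorLaplacian F j = polyLaplacian (F j) :=
  rfl

theorem positionDot_apply (F : σ → MvPolynomial σ R) : positionDot F = ∑ j, X j * F j := by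
  simp [positionDot]

theorem polyDivergence_apply (F : σ → MvPolynomial σ R) :
    polyDivergence F = ∑ j, pderiv j (F j) := by
  simp [polyDivergence]

theorem radialDefect_apply (c : R) (F : σ → MvPolynomial σ R) :
    radialDefect c F = polyLaplacian (positionDot F) + c • polyDivergence F :=
  rfl

theorem polyLaplacian_pderiv (j : σ) (p : MvPolynomial σ R) :
    polyLaplacian (pderiv j p) = pderiv j (polyLaplacian p) := by
  simp only [polyLaplacian_apply, map_sum, pderiv_pderiv_comm _ j]

theorem polyLaplacian_X_mul (j : σ) (p : MvPolynomial σ R) :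
    polyLaplacian (X j * p) = X j * polyLaplacian p + (2 : R) • pderiv j p := by
  classical
  have pderiv_pderiv_X_mul (i : σ) : pderiv i (pderiv i (X j * p)) =
      X j * pderiv i (pderiv i p) + if i = j then (2 : R) • pderiv j p else 0 := by
    split_ifs with h
    · subst h
      simp only [pderiv_mul, map_add, pderiv_X_self, pderiv_one, two_smul]
      ring
    · simp [pderiv_X_of_ne (Ne.symm h)]
  simp only [polyLaplacian_apply, pderiv_pderiv_X_mul, Finset.sum_add_distrib, Finset.mul_sum,
    Finset.sum_ite_eq', Finset.mem_univ, if_true]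

theorem polyLaplacian_polyDivergence (F : σ → MvPolynomial σ R) :
    polyLaplacian (polyDivergence F) = polyDivergence (vectorLaplacian F) := by
  simp only [polyDivergence_apply, map_sum, polyLaplacian_pderiv, vectorLaplacian_apply]

theorem polyLaplacian_positionDot (F : σ → MvPolynomial σ R) :
    polyLaplacian (positionDot F) =
      positionDot (vectorLaplacian F) + (2 : R) • polyDivergence F := by
  simp only [positionDot_apply, polyDivergence_apply, map_sum, polyLaplacian_X_mul,
    vectorLaplacian_apply, Finset.sum_add_distrib, Finset.smul_sum]

theorem polyLaplacian_radialDefect (c : R) (F : σ → MvPolynomial σ R) :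
    polyLaplacian (radialDefect c F) = radialDefect (c + 2) (vectorLaplacian F) := by
  simp only [radialDefect_apply, map_add, map_smul, polyLaplacian_polyDivergence,
    polyLaplacian_positionDot]
  module

end CommSemiring

theorem forall_radialDefect_eq_zero_iff {σ R : Type*} [Fintype σ] [CommRing R]
    {F : ℕ → σ → MvPolynomial σ R} (hF : ∀ l, F (l + 2) = -vectorLaplacian (F l)) :
    (∀ l : ℕ, radialDefect (l : R) (F l) = 0) ↔
      radialDefect 0 (F 0) = 0 ∧ radialDefect 1 (F 1) = 0 := by
  refine ⟨fun h => ⟨by simpa using h 0, by simpa using h 1⟩, fun ⟨h₀, h₁⟩ l => ?_⟩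
  induction l using Nat.twoStepInduction with
  | zero => simpa using h₀
  | one => simpa using h₁
  | more l ih _ =>
    rw [hF, map_neg, Nat.cast_add, Nat.cast_two, ← polyLaplacian_radialDefect, ih, map_zero,
      neg_zero]

section Field

variable {σ K : Type*} [Fintype σ] [Field K]

theorem radialDefect_eq_zero_iff {c : K} (hc : c ≠ 0) (hc₂ : c + 2 ≠ 0) (h₂ : (2 : K) ≠ 0)
    (F : σ → MvPolynomial σ K) :
    radialDefect c F = 0 ↔
      (c + 2)⁻¹ • positionDot (vectorLaplacian F) = c⁻¹ • polyLaplacian (positionDot F) := by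
  have sub_eq_smul : (c + 2)⁻¹ • positionDot (vectorLaplacian F) -
      c⁻¹ • polyLaplacian (positionDot F) = (-2 * ((c + 2)⁻¹ * c⁻¹)) • radialDefect c F := by
    rw [radialDefect_apply, polyLaplacian_positionDot]
    match_scalars <;> field_simp <;> ring
  have coeff_ne_zero : -2 * ((c + 2)⁻¹ * c⁻¹) ≠ 0 := by simp [hc, hc₂, h₂]
  rw [← sub_eq_zero (b := c⁻¹ • _), sub_eq_smul, smul_eq_zero_iff_right coeff_ne_zero]

theorem system_equivalence_general [CharZero K] (f : σ → ℕ → MvPolynomial σ K)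
    (hrec : ∀ j l, f j (l + 2) = -polyLaplacian (f j l)) :
    (((∑ j, X j * f j 0) = 0) ∧
      (∀ l : ℕ, (∑ j, ((l : K) + 3)⁻¹ • (X j * f j (l + 3))) =
        -(∑ j, polyLaplacian (((l : K) + 1)⁻¹ • (X j * f j (l + 1)))))) ↔
    (((∑ j, X j * f j 0) = 0) ∧
      ((∑ j, pderiv j (f j 1)) = -polyLaplacian (∑ j, X j * f j 1))) := by
  let F (l : ℕ) (j : σ) : MvPolynomial σ K := f j l
  have hF (l : ℕ) : F (l + 2) = -vectorLaplacian (F l) := funext fun j => hrec j l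
  have sum_X_mul (l : ℕ) : ∑ j, X j * f j l = positionDot (F l) := (positionDot_apply _).symm
  have sum_pderiv (l : ℕ) : ∑ j, pderiv j (f j l) = polyDivergence (F l) :=
    (polyDivergence_apply _).symm
  simp only [← map_sum, ← Finset.smul_sum, map_smul, sum_X_mul, sum_pderiv]
  have higher_eq_iff (l : ℕ) : ((l : K) + 3)⁻¹ • positionDot (F (l + 3)) =
      -(((l : K) + 1)⁻¹ • polyLaplacian (positionDot (F (l + 1)))) ↔
        radialDefect ((l + 1 : ℕ) : K) (F (l + 1)) = 0 := by
    have add_two_ne_zero : ((l + 1 : ℕ) : K) + 2 ≠ 0 := by exact_mod_cast (l + 2).succ_ne_zero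
    rw [radialDefect_eq_zero_iff (Nat.cast_ne_zero.2 l.succ_ne_zero) add_two_ne_zero two_ne_zero,
      hF (l + 1), map_neg, smul_neg, neg_inj]
    norm_num [add_assoc]
  have first_eq_iff : polyDivergence (F 1) = -polyLaplacian (positionDot (F 1)) ↔
      radialDefect 1 (F 1) = 0 := by
    rw [radialDefect_apply, one_smul, add_comm, eq_neg_iff_add_eq_zero]
  simp only [higher_eq_iff, first_eq_iff]
  refine and_congr_right fun h₀ => ⟨fun h => by simpa using h 0, fun h₁ l => ?_⟩
  have radialDefect_zero : radialDefect 0 (F 0) = 0 := by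
    rw [radialDefect_apply, h₀, map_zero, zero_smul, add_zero]
  exact (forall_radialDefect_eq_zero_iff hF).2 ⟨radialDefect_zero, h₁⟩ (l + 1)

end Field

theorem lapNm1_eq_polyLaplacian {m : ℕ} (p : MvPolynomial (Fin m) ℝ) :
    lapNm1 p = polyLaplacian p :=
  (polyLaplacian_apply p).symm

/-- for sequences `f^j_l` in `ℝ[x₁,…,x_{n−1}]` satisfying
`f^j_{l+2} = −Δ_{n−1}(f^j_l)`, the system
`(a) ∑ⱼ xⱼ f^j₀ = 0` and `(b) ∑ⱼ xⱼ f^j_{l+3}/(l+3) = −∑ⱼ Δ_{n−1}(xⱼ f^j_{l+1}/(l+1))`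
(for all `l ≥ 0`) is equivalent to the system
`(a) ∑ⱼ xⱼ f^j₀ = 0` and `(b') ∑ⱼ ∂_{xⱼ}(f^j₁) = −Δ_{n−1}(∑ⱼ xⱼ f^j₁)`. -/
theorem system_equivalence (n : ℕ) (hn : 3 ≤ n)
    (f : Fin (n - 1) → ℕ → MvPolynomial (Fin (n - 1)) ℝ)
    (hrec : ∀ j l, f j (l + 2) = -lapNm1 (f j l)) :
    (((∑ j : Fin (n - 1), X j * f j 0) = 0) ∧
      (∀ l : ℕ, (∑ j : Fin (n - 1), ((l : ℝ) + 3)⁻¹ • (X j * f j (l + 3))) =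
        -(∑ j : Fin (n - 1), lapNm1 (((l : ℝ) + 1)⁻¹ • (X j * f j (l + 1)))))) ↔
    (((∑ j : Fin (n - 1), X j * f j 0) = 0) ∧
      ((∑ j : Fin (n - 1), pderiv j (f j 1)) =
        -lapNm1 (∑ j : Fin (n - 1), X j * f j 1))) := by
  simp only [lapNm1_eq_polyLaplacian] at hrec ⊢
  exact system_equivalence_general f hrec
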